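/- Let R be a local ring with 1/2. The maximal cardinality of a set of pairwise commuting involutions in GL_n(R) (elements g ≠ E with g² = E, excluding the identity) is 2ⁿ - 1. -/

import Mathlib

/-!
Since `2` is invertible, `g ↦ (1 + g) / 2` turns commuting involutions into commuting idempotents.
Finitely many commuting idempotents are sums of the atoms of the Boolean algebra they generate, so
they number at most `2 ^ m`, where `m` counts the nonzero atoms. The atoms are orthogonal, nonzero
idempotents never lie in the Jacobson radical, and so the nonzero atoms stay nonzero in `Mₙ(D)`,
where `D` is the residue division ring. There at most `n` nonzero idempotents can be mutually
orthogonal, because nonzero rows of orthogonal idempotents are linearly independent. Hence `m ≤ n`,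
and the bound is attained by the diagonal matrices with entries `±1`.
-/

open Finset

section Atoms

variable {κ A : Type*} [Fintype κ] [DecidableEq κ] [CommRing A] {a : κ → A}

/-- The atom indexed by `T` of the Boolean algebra of idempotents generated by the family `a`:
the meet of the `a k` for `k ∈ T` and of their complements `1 - a k` for `k ∉ T`. It may be `0`. -/
def idempotentAtom (a : κ → A) (T : Finset κ) : A :=
  (∏ k ∈ T, a k) * ∏ k ∈ Tᶜ, (1 - a k)

theorem mul_idempotentAtom (ha : ∀ k, IsIdempotentElem (a k)) (k : κ) (T : Finset κ) :
    a k * idempotentAtom a T = if k ∈ T then idempotentAtom a T else 0 := by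
  unfold idempotentAtom
  split_ifs with hk
  · rw [← mul_assoc, ← mul_prod_erase T a hk, ← mul_assoc, (ha k).eq]
  · rw [← mul_prod_erase Tᶜ (1 - a ·) (mem_compl.2 hk), mul_left_comm, ← mul_assoc (a k),
      (ha k).mul_one_sub_self, zero_mul, mul_zero]

theorem sum_idempotentAtom (a : κ → A) : ∑ T, idempotentAtom a T = 1 := by
  simp only [idempotentAtom, ← Fintype.prod_add, add_sub_cancel, prod_const_one]

theorem idempotentAtom_mul_idempotentAtom_of_not_subset (ha : ∀ k, IsIdempotentElem (a k))
    {T U : Finset κ} (h : ¬T ⊆ U) : idempotentAtom a T * idempotentAtom a U = 0 := by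
  obtain ⟨k, hkT, hkU⟩ := not_subset.1 h
  calc idempotentAtom a T * idempotentAtom a U
      = idempotentAtom a T * (a k * idempotentAtom a U) := by
        rw [← mul_assoc, mul_comm _ (a k), mul_idempotentAtom ha, if_pos hkT]
    _ = 0 := by rw [mul_idempotentAtom ha, if_neg hkU, mul_zero]

theorem completeOrthogonalIdempotents_idempotentAtom (ha : ∀ k, IsIdempotentElem (a k)) :
    CompleteOrthogonalIdempotents (idempotentAtom a) := by
  refine CompleteOrthogonalIdempotents.iff_ortho_complete.2 ⟨fun T U hTU ↦ ?_, sum_idempotentAtom a⟩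
  by_cases h : T ⊆ U
  · exact (mul_comm _ _).trans <|
      idempotentAtom_mul_idempotentAtom_of_not_subset ha fun h' ↦ hTU (h.antisymm h')
  · exact idempotentAtom_mul_idempotentAtom_of_not_subset ha h

theorem eq_sum_idempotentAtom (ha : ∀ k, IsIdempotentElem (a k)) (k : κ) :
    a k = ∑ T, if k ∈ T then idempotentAtom a T else 0 := by
  simp_rw [← mul_idempotentAtom ha, ← mul_sum, sum_idempotentAtom, mul_one]

theorem card_le_two_pow_card_idempotentAtom_ne_zero [DecidableEq A]
    (ha : ∀ k, IsIdempotentElem (a k)) (inj : Function.Injective a) :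
    Fintype.card κ ≤ 2 ^ Fintype.card {T : Finset κ // idempotentAtom a T ≠ 0} := by
  let atomsBelow (k : κ) : Finset {T : Finset κ // idempotentAtom a T ≠ 0} := {T | k ∈ T.1}
  have atomsBelow_injective : Function.Injective atomsBelow := by
    intro k l hkl
    apply inj
    rw [eq_sum_idempotentAtom ha k, eq_sum_idempotentAtom ha l]
    refine sum_congr rfl fun T _ ↦ ?_
    by_cases hT : idempotentAtom a T = 0
    · simp only [hT, ite_self]
    · have mem_iff : k ∈ T ↔ l ∈ T := by simpa [atomsBelow] using congr(⟨T, hT⟩ ∈ $hkl)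
      simp only [mem_iff]
  simpa only [Fintype.card_finset] using Fintype.card_le_of_injective _ atomsBelow_injective

end Atoms

section Commuting

variable {κ A : Type*} [Fintype κ] [Ring A]

open scoped IsMulCommutative in
theorem exists_orthogonalIdempotents_of_idempotents {a : κ → A} (ha : ∀ k, IsIdempotentElem (a k))
    (comm : ∀ k l, Commute (a k) (a l)) (inj : Function.Injective a) :
    ∃ (m : ℕ) (e : Fin m → A), OrthogonalIdempotents e ∧ (∀ i, e i ≠ 0) ∧
      Fintype.card κ ≤ 2 ^ m := by
  classical
  have : IsMulCommutative (Subring.closure (Set.range a)) := Subring.isMulCommutative_closure <| by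
    rintro _ ⟨k, rfl⟩ _ ⟨l, rfl⟩
    exact comm k l
  let b (k : κ) : Subring.closure (Set.range a) := ⟨a k, Subring.subset_closure ⟨k, rfl⟩⟩
  have hb (k : κ) : IsIdempotentElem (b k) := Subtype.ext (ha k)
  have b_injective : Function.Injective b := fun k l hkl ↦ inj congr(($hkl).1)
  let nonzeroAtomsEquiv := Fintype.equivFin {T : Finset κ // idempotentAtom b T ≠ 0}
  refine ⟨_, fun i ↦ ↑(idempotentAtom b (nonzeroAtomsEquiv.symm i).1), ?_, fun i ↦ ?_,
    card_le_two_pow_card_idempotentAtom_ne_zero hb b_injective⟩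
  · exact ((completeOrthogonalIdempotents_idempotentAtom hb).toOrthogonalIdempotents.embedding
      (nonzeroAtomsEquiv.symm.toEmbedding.trans (.subtype _))).map (Subring.subtype _)
  · exact Subtype.coe_ne_coe.2 (nonzeroAtomsEquiv.symm i).2

theorem isIdempotentElem_invOf_two_mul_one_add [Invertible (2 : A)] {g : A} (hg : g * g = 1) :
    IsIdempotentElem (⅟2 * (1 + g)) := by
  have half_comm : Commute (1 + g) (⅟2 : A) := (Commute.ofNat_right (1 + g) 2).invOf_right
  have sq : (1 + g) * (1 + g) = 2 * (1 + g) := by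
    rw [mul_add, mul_one, add_mul, one_mul, hg, add_comm g 1, two_mul]
  rw [IsIdempotentElem, mul_assoc, ← mul_assoc (1 + g), half_comm.eq, mul_assoc, sq,
    invOf_mul_cancel_left]

theorem exists_orthogonalIdempotents_of_involutions (h2 : IsUnit (2 : A)) {g : κ → A}
    (hg : ∀ k, g k * g k = 1) (comm : ∀ k l, Commute (g k) (g l)) (inj : Function.Injective g) :
    ∃ (m : ℕ) (e : Fin m → A), OrthogonalIdempotents e ∧ (∀ i, e i ≠ 0) ∧
      Fintype.card κ ≤ 2 ^ m := by
  let := h2.invertible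
  have half_comm (x : A) : Commute (⅟2) x := (Commute.ofNat_left 2 x).invOf_left
  refine exists_orthogonalIdempotents_of_idempotents (a := fun k ↦ ⅟2 * (1 + g k))
    (fun k ↦ isIdempotentElem_invOf_two_mul_one_add (hg k)) (fun k l ↦ ?_) fun k l hkl ↦ ?_
  · have sum_comm : Commute (1 + g k) (1 + g l) :=
      (Commute.one_left _).add_left ((Commute.one_right _).add_right (comm k l))
    exact (half_comm _).mul_left ((half_comm _).symm.mul_right sum_comm)
  · exact inj (add_left_cancel ((isUnit_of_invertible (⅟2 : A)).mul_left_cancel hkl))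

end Commuting

section Matrix

variable {ι κ : Type*} [Fintype ι] [DecidableEq ι] [Fintype κ]

theorem card_le_of_orthogonalIdempotents_matrix {D : Type*} [DivisionRing D]
    {e : κ → Matrix ι ι D} (he : OrthogonalIdempotents e) (ne_zero : ∀ k, e k ≠ 0) :
    Fintype.card κ ≤ Fintype.card ι := by
  classical
  have exists_row (k : κ) : ∃ i, e k i ≠ 0 := Function.ne_iff.1 (ne_zero k)
  choose r hr using exists_row
  let v (k : κ) : ι → D := e k (r k)
  have v_vecMul (k l : κ) : Matrix.vecMul (v k) (e l) = if k = l then v k else 0 := by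
    rw [← Matrix.mul_apply_eq_vecMul, he.mul_eq]
    split_ifs <;> rfl
  have v_linearIndependent : LinearIndependent D v := by
    refine Fintype.linearIndependent_iff.2 fun c hc l ↦ ?_
    have hcl : c l • v l = 0 := by
      calc c l • v l = Matrix.vecMul (∑ k, c k • v k) (e l) := by
            simp [Matrix.sum_vecMul, Matrix.smul_vecMul, v_vecMul]
        _ = 0 := by rw [hc, Matrix.zero_vecMul]
    exact (smul_eq_zero.1 hcl).resolve_right (hr l)
  simpa only [Module.finrank_fintype_fun_eq_card] using
    v_linearIndependent.fintype_card_le_finrank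

theorem eq_zero_of_isIdempotentElem_of_mem_jacobson {A : Type*} [Ring A] {e : A}
    (he : IsIdempotentElem e) (mem : e ∈ Ring.jacobson A) : e = 0 := by
  rw [← Ideal.jacobson_bot] at mem
  obtain ⟨z, hz⟩ := Ideal.mem_jacobson_iff.1 mem (-1)
  have left_inv : z * (1 - e) = 1 := by
    rw [Ideal.mem_bot, sub_eq_zero, mul_neg_one, neg_mul, neg_add_eq_sub] at hz
    rw [mul_sub, mul_one, hz]
  rw [← one_mul e, ← left_inv, mul_assoc, he.one_sub_mul_self, mul_zero]

theorem ker_mapMatrix_le_jacobson {R S : Type*} [Ring R] [Ring S] {f : R →+* S}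
    (hf : RingHom.ker f ≤ Ring.jacobson R) :
    RingHom.ker (f.mapMatrix (m := ι)) ≤ Ring.jacobson (Matrix ι ι R) := by
  intro X hX
  rw [← Ideal.jacobson_bot, ← Ideal.matrix_bot]
  apply Ideal.matrix_jacobson_le
  rw [Ideal.mem_matrix]
  intro i j
  rw [Ideal.jacobson_bot]
  exact hf congr($hX i j)

variable {R D : Type*} [Ring R] [DivisionRing D] {f : R →+* D}

theorem card_le_of_orthogonalIdempotents_matrix_of_ker_le (hf : RingHom.ker f ≤ Ring.jacobson R)
    {e : κ → Matrix ι ι R} (he : OrthogonalIdempotents e) (ne_zero : ∀ k, e k ≠ 0) :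
    Fintype.card κ ≤ Fintype.card ι :=
  card_le_of_orthogonalIdempotents_matrix (e := f.mapMatrix ∘ e) (he.map _) fun k map_eq_zero ↦
    ne_zero k <| eq_zero_of_isIdempotentElem_of_mem_jacobson (he.idem k) <|
      ker_mapMatrix_le_jacobson hf map_eq_zero

theorem card_involutions_matrix_le (h2 : IsUnit (2 : R)) (hf : RingHom.ker f ≤ Ring.jacobson R)
    {g : κ → Matrix ι ι R} (hg : ∀ k, g k * g k = 1) (comm : ∀ k l, Commute (g k) (g l))
    (inj : Function.Injective g) : Fintype.card κ ≤ 2 ^ Fintype.card ι := by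
  have h2_matrix : IsUnit (2 : Matrix ι ι R) := by
    simpa only [map_ofNat] using h2.map (Matrix.scalar ι)
  obtain ⟨m, e, he, ne_zero, card_le⟩ :=
    exists_orthogonalIdempotents_of_involutions h2_matrix hg comm inj
  have m_le : m ≤ Fintype.card ι := by
    simpa only [Fintype.card_fin] using
      card_le_of_orthogonalIdempotents_matrix_of_ker_le hf he ne_zero
  exact card_le.trans (Nat.pow_le_pow_right two_pos m_le)

theorem card_nontrivial_involutions_lt (h2 : IsUnit (2 : R))
    (hf : RingHom.ker f ≤ Ring.jacobson R) {S : Finset (Matrix ι ι R)ˣ}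
    (hS : ∀ g ∈ S, g ≠ 1 ∧ g ^ 2 = 1) (comm : ∀ g ∈ S, ∀ h ∈ S, g * h = h * g) :
    S.card < 2 ^ Fintype.card ι := by
  classical
  have one_notMem : 1 ∉ S := fun h ↦ (hS 1 h).1 rfl
  have sq_eq_one : ∀ g ∈ insert 1 S, g * g = 1 :=
    forall_mem_insert _ _ _ |>.2 ⟨one_mul 1, fun g hg ↦ (sq g).symm.trans (hS g hg).2⟩
  have comm_insert : ∀ g ∈ insert 1 S, ∀ h ∈ insert 1 S, Commute g h := by
    simp only [forall_mem_insert]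
    exact ⟨⟨.one_left 1, fun h _ ↦ .one_left h⟩, fun g hg ↦ ⟨.one_right g, comm g hg⟩⟩
  have card_le := card_involutions_matrix_le h2 hf
    (g := fun g : ↥(insert 1 S) ↦ (g.1 : Matrix ι ι R))
    (fun g ↦ congr(($(sq_eq_one g g.2)).val))
    (fun g h ↦ congr(($(comm_insert g g.2 h h.2)).val))
    (Units.val_injective.comp Subtype.val_injective)
  rwa [Fintype.card_coe, card_insert_of_notMem one_notMem, Nat.succ_le_iff] at card_le

end Matrix

section SignDiagonal

variable (ι R : Type*) [Fintype ι] [DecidableEq ι] [Ring R]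

/-- The homomorphism sending a family of signs `ε` to the invertible diagonal matrix with diagonal
`ε`; its image is the extremal family of commuting involutions. -/
def signDiagonal : (ι → ℤˣ) →* (Matrix ι ι R)ˣ :=
  MonoidHom.toHomUnits
    { toFun ε := Matrix.diagonal fun i ↦ ((ε i : ℤ) : R)
      map_one' := by simp
      map_mul' ε δ := by simp }

variable {R}

theorem signDiagonal_injective (h : (-1 : R) ≠ 1) : Function.Injective (signDiagonal ι R) := by
  intro ε δ hεδ
  funext i
  have hi : ((ε i : ℤ) : R) = ((δ i : ℤ) : R) :=
    congrFun (Matrix.diagonal_injective congr(($hεδ).val)) i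
  obtain hε | hε := Int.units_eq_one_or (ε i) <;> obtain hδ | hδ := Int.units_eq_one_or (δ i) <;>
    simp_all [eq_comm]

theorem exists_commuting_involutions (h : (-1 : R) ≠ 1) :
    ∃ S : Finset (Matrix ι ι R)ˣ, S.card = 2 ^ Fintype.card ι - 1 ∧
      (∀ g ∈ S, g ≠ 1 ∧ g ^ 2 = 1) ∧ ∀ g ∈ S, ∀ h ∈ S, g * h = h * g := by
  refine ⟨(univ.erase 1).map ⟨signDiagonal ι R, signDiagonal_injective ι h⟩, ?_, ?_, ?_⟩
  · simp
  · simp only [forall_mem_map, mem_erase, mem_univ, and_true, Function.Embedding.coeFn_mk]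
    intro ε hε
    refine ⟨(map_ne_one_iff _ (signDiagonal_injective ι h)).2 hε, ?_⟩
    rw [← map_pow, show ε ^ 2 = 1 from funext fun i ↦ Int.units_sq (ε i), map_one]
  · simp only [forall_mem_map, Function.Embedding.coeFn_mk]
    exact fun ε _ δ _ ↦ (Commute.all ε δ).map (signDiagonal ι R)

end SignDiagonal

section LocalRing

variable {R : Type*} [Ring R] [IsLocalRing R]

theorem eq_zero_or_one_of_isIdempotentElem {e : R} (he : IsIdempotentElem e) : e = 0 ∨ e = 1 := by
  rcases IsLocalRing.isUnit_or_isUnit_of_add_one (sub_add_cancel 1 e) with h | h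
  · exact .inl (sub_eq_self.1 ((IsIdempotentElem.iff_eq_one_of_isUnit h).1 he.one_sub))
  · exact .inr ((IsIdempotentElem.iff_eq_one_of_isUnit h).1 he)

instance isDedekindFiniteMonoid_of_isLocalRing : IsDedekindFiniteMonoid R where
  mul_eq_one_symm {a b} hab := by
    have idem : IsIdempotentElem (b * a) := by
      rw [IsIdempotentElem, mul_assoc, ← mul_assoc a, hab, one_mul]
    refine (eq_zero_or_one_of_isIdempotentElem idem).resolve_left fun h ↦ one_ne_zero (α := R) ?_
    calc (1 : R) = a * (b * a) * b := by rw [← mul_assoc, hab, one_mul, hab]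
      _ = 0 := by rw [h, mul_zero, zero_mul]

theorem mem_jacobson_of_not_isUnit {a : R} (ha : ¬IsUnit a) : a ∈ Ring.jacobson R := by
  rw [← Ideal.jacobson_bot, Ideal.mem_jacobson_iff]
  intro y
  have not_isUnit : ¬IsUnit (-(y * a)) := fun h ↦
    ha (isUnit_of_mul_isUnit_right ((IsUnit.neg_iff _).1 h))
  have isUnit : IsUnit (y * a + 1) := (IsLocalRing.isUnit_or_isUnit_of_add_one
    (neg_add_cancel_left (y * a) 1)).resolve_left not_isUnit
  obtain ⟨z, hz⟩ := isUnit.exists_left_inv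
  refine ⟨z, ?_⟩
  rw [Ideal.mem_bot, mul_assoc, ← mul_add_one, hz, sub_self]

variable (R) in
/-- The residue division ring of a not necessarily commutative local ring, realised as the quotient
by the Jacobson radical because Mathlib's `IsLocalRing.ResidueField` requires commutativity. -/
noncomputable abbrev residueDivisionRing : DivisionRing (R ⧸ Ring.jacobson R) :=
  have : Nontrivial (R ⧸ Ring.jacobson R) :=
    Ideal.Quotient.nontrivial_iff.2 (Ring.jacobson_lt_top R).ne
  DivisionRing.ofIsUnitOrEqZero <| by
    rw [Ideal.Quotient.mk_surjective.forall]
    intro a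
    by_cases ha : IsUnit a
    · exact .inl (ha.map _)
    · exact .inr (Ideal.Quotient.eq_zero_iff_mem.2 (mem_jacobson_of_not_isUnit ha))

end LocalRing

theorem stmt_6_general {R D : Type*} [Ring R] [DivisionRing D] (f : R →+* D)
    (hf : RingHom.ker f ≤ Ring.jacobson R) (h2 : IsUnit (2 : R))
    (ι : Type*) [Fintype ι] [DecidableEq ι] :
    IsGreatest {k : ℕ | ∃ S : Finset ((Matrix ι ι R)ˣ),
        S.card = k ∧ (∀ g ∈ S, g ≠ 1 ∧ g ^ 2 = 1) ∧
        (∀ g ∈ S, ∀ h ∈ S, g * h = h * g)}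
      (2 ^ Fintype.card ι - 1) := by
  have := f.domain_nontrivial
  have neg_one_ne_one : (-1 : R) ≠ 1 := by
    rw [Ne, neg_eq_iff_add_eq_zero, one_add_one_eq_two]
    exact h2.ne_zero
  refine ⟨exists_commuting_involutions ι neg_one_ne_one, ?_⟩
  rintro k ⟨S, rfl, hS, comm⟩
  exact Nat.le_sub_one_of_lt (card_nontrivial_involutions_lt h2 hf hS comm)

theorem stmt_6 (R : Type*) [Ring R] [Nontrivial R] [IsLocalRing R] (h2 : IsUnit (2 : R))
    (n : ℕ) :
    IsGreatest {k : ℕ | ∃ S : Finset ((Matrix (Fin n) (Fin n) R)ˣ),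
        S.card = k ∧ (∀ g ∈ S, g ≠ 1 ∧ g ^ 2 = 1) ∧
        (∀ g ∈ S, ∀ h ∈ S, g * h = h * g)}
      (2 ^ n - 1) := by
  let := residueDivisionRing R
  simpa only [Fintype.card_fin] using
    stmt_6_general (Ideal.Quotient.mk (Ring.jacobson R)) Ideal.mk_ker.le h2 (Fin n)
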